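/- There exists an algebra homomorphism U : Y(Q(n)) → U(Q(n)) determined on generators by U(T_{i,j}^{(r)}) = (−1)^r e_{j,i}^{(r)} and U(T_{−i,j}^{(r)}) = (−1)^r f_{j,i}^{(r)} for i, j > 0 and r > 0, and U(T_{i,j}^{(0)}) = δ_{i,j} (values on the remaining generators being forced by T_{−i,−j}^{(m)} = (−1)^m T_{i,j}^{(m)}). -/

import Mathlib

noncomputable section
open scoped Classical

/-! # The universal enveloping superalgebra `U(Q(n))` of the queer Lie superalgebra

`U(Q(n))` is presented by even generators `e i j` and odd generators `f i j`
(`1 ≤ i,j ≤ n`) subject to the relations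
`[e i j, e k l] = δ_{jk} e i l - δ_{li} e k j`,
`[e i j, f k l] = δ_{jk} f i l - δ_{li} f k j`,
`f i j * f k l + f k l * f i j = δ_{jk} e i l + δ_{li} e k j`. -/

/-- Generators of `U(Q(n))`: `E i j` (even) and `F i j` (odd). -/
inductive QGen (n : ℕ) : Type
  | E : Fin n → Fin n → QGen n
  | F : Fin n → Fin n → QGen n

/-- Kronecker delta. -/
def kd {n : ℕ} (i j : Fin n) : ℂ := if i = j then 1 else 0

/-- The defining relations of `U(Q(n))`. -/
inductive QRel (n : ℕ) : FreeAlgebra ℂ (QGen n) → FreeAlgebra ℂ (QGen n) → Prop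
  | ee (i j k l : Fin n) : QRel n
      (FreeAlgebra.ι ℂ (QGen.E i j) * FreeAlgebra.ι ℂ (QGen.E k l) -
        FreeAlgebra.ι ℂ (QGen.E k l) * FreeAlgebra.ι ℂ (QGen.E i j))
      (kd j k • FreeAlgebra.ι ℂ (QGen.E i l) - kd l i • FreeAlgebra.ι ℂ (QGen.E k j))
  | ef (i j k l : Fin n) : QRel n
      (FreeAlgebra.ι ℂ (QGen.E i j) * FreeAlgebra.ι ℂ (QGen.F k l) -
        FreeAlgebra.ι ℂ (QGen.F k l) * FreeAlgebra.ι ℂ (QGen.E i j))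
      (kd j k • FreeAlgebra.ι ℂ (QGen.F i l) - kd l i • FreeAlgebra.ι ℂ (QGen.F k j))
  | ff (i j k l : Fin n) : QRel n
      (FreeAlgebra.ι ℂ (QGen.F i j) * FreeAlgebra.ι ℂ (QGen.F k l) +
        FreeAlgebra.ι ℂ (QGen.F k l) * FreeAlgebra.ι ℂ (QGen.F i j))
      (kd j k • FreeAlgebra.ι ℂ (QGen.E i l) + kd l i • FreeAlgebra.ι ℂ (QGen.E k j))

/-- The universal enveloping superalgebra `U(Q(n))`. -/
abbrev UQ (n : ℕ) := RingQuot (QRel n)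

/-- The generator `e i j` of `U(Q(n))`. -/
def Ue {n : ℕ} (i j : Fin n) : UQ n :=
  RingQuot.mkAlgHom ℂ (QRel n) (FreeAlgebra.ι ℂ (QGen.E i j))

/-- The generator `f i j` of `U(Q(n))`. -/
def Uf {n : ℕ} (i j : Fin n) : UQ n :=
  RingQuot.mkAlgHom ℂ (QRel n) (FreeAlgebra.ι ℂ (QGen.F i j))

/-- Sergeev's elements `e_{ij}^{(m)}` and `f_{ij}^{(m)}` of `U(Q(n))`, defined recursively by
`e^{(0)} = δ`, `f^{(0)} = 0`,
`e_{ij}^{(m)} = Σ_k e_{ik} e_{kj}^{(m-1)} + (-1)^{m+1} Σ_k f_{ik} f_{kj}^{(m-1)}`,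
`f_{ij}^{(m)} = Σ_k e_{ik} f_{kj}^{(m-1)} + (-1)^{m+1} Σ_k f_{ik} e_{kj}^{(m-1)}`. -/
def efU (n : ℕ) : ℕ → (Fin n → Fin n → UQ n) × (Fin n → Fin n → UQ n)
  | 0 => (fun i j => algebraMap ℂ (UQ n) (kd i j), fun _ _ => 0)
  | m + 1 =>
      (fun i j => (∑ k, Ue i k * (efU n m).1 k j) +
        (-1 : ℂ) ^ m • ∑ k, Uf i k * (efU n m).2 k j,
       fun i j => (∑ k, Ue i k * (efU n m).2 k j) +
        (-1 : ℂ) ^ m • ∑ k, Uf i k * (efU n m).1 k j)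

/-- `e_{ij}^{(m)}`. -/
def eU {n : ℕ} (m : ℕ) (i j : Fin n) : UQ n := (efU n m).1 i j
/-- `f_{ij}^{(m)}`. -/
def fU {n : ℕ} (m : ℕ) (i j : Fin n) : UQ n := (efU n m).2 i j

/-- For `l ∣ n`, the index `l(p-1)+i` of `{1,…,n}` (0-based: block `p`, position `i`). -/
def bidx {n l : ℕ} (h : l ∣ n) (p : Fin (n / l)) (i : Fin l) : Fin n :=
  ⟨l * p.val + i.val, by
    have h1 : i.val < l := i.isLt
    have h2 : p.val + 1 ≤ n / l := p.isLt
    have h3 : l * (p.val + 1) ≤ l * (n / l) := Nat.mul_le_mul_left l h2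
    have h4 : n / l * l ≤ n := Nat.div_mul_le_self n l
    have h5 : l * (p.val + 1) = l * p.val + l := Nat.mul_succ l p.val
    have h6 : l * (n / l) = n / l * l := Nat.mul_comm l (n / l)
    omega⟩
set_option linter.unusedVariables false

/-! # The character `χ`, the left ideal `I_χ` and the finite W-algebra data

Here `l ∣ n` and `χ` corresponds to the even nilpotent element of `Q(n)` all of whose
Jordan blocks have size `l`.  The subalgebra `m = ⊕_{j<0} g_j` is spanned by the
elements `e_{l(p-1)+i+k, l(q-1)+i}` and `f_{l(p-1)+i+k, l(q-1)+i}` (`k ≥ 1`), and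
`χ(e_{l(p-1)+i+1, l(q-1)+i}) = δ_{pq}` and `χ = 0` on the other basis elements. -/

/-- The set of elements `a - χ(a)` for `a` ranging over the standard basis of `m`;
(rows/columns written 0-based: `a` is the position of the row inside its block `p`,
`b` the position of the column inside its block `q`, with `b < a`). -/
def mSet (n l : ℕ) (h : l ∣ n) : Set (UQ n) :=
  { x : UQ n | ∃ (p q : Fin (n / l)) (a b : Fin l), b.val < a.val ∧
      (x = Ue (bidx h p a) (bidx h q b) -
            algebraMap ℂ (UQ n) (if a.val = b.val + 1 ∧ p = q then 1 else 0) ∨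
       x = Uf (bidx h p a) (bidx h q b)) }

/-- The left ideal `I_χ` of `U(Q(n))` generated by the `a - χ(a)`, `a ∈ m`. -/
def Ichi (n l : ℕ) (h : l ∣ n) : Submodule (UQ n) (UQ n) :=
  Submodule.span (UQ n) (mSet n l h)

/-- The quotient `U(Q(n))/I_χ` (as a `ℂ`-vector space). -/
abbrev Wq (n l : ℕ) (h : l ∣ n) := UQ n ⧸ (Ichi n l h).restrictScalars ℂ

/-- The quotient map `π : U(Q(n)) → U(Q(n))/I_χ`. -/
def piq (n l : ℕ) (h : l ∣ n) : UQ n →ₗ[ℂ] Wq n l h :=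
  ((Ichi n l h).restrictScalars ℂ).mkQ

/-- `y` super-commutes with `m` into `I_χ`:  `[a, y] ∈ I_χ` for every `a` in the standard
basis of `m`.  Here the super-commutator of the odd element `f` with (the possibly
non-homogeneous) `y` is `f * y - σ(y) * f`, where `σ` is the parity involution of
`U(Q(n))` (the algebra automorphism fixing the `e`'s and negating the `f`'s). -/
def Wcond {n l : ℕ} (h : l ∣ n) (σ : UQ n →ₐ[ℂ] UQ n) (y : UQ n) : Prop :=
  ∀ (p q : Fin (n / l)) (a b : Fin l), b.val < a.val →
    (Ue (bidx h p a) (bidx h q b) * y - y * Ue (bidx h p a) (bidx h q b) ∈ Ichi n l h) ∧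
    (Uf (bidx h p a) (bidx h q b) * y - σ y * Uf (bidx h p a) (bidx h q b) ∈ Ichi n l h)

/-- The finite W-algebra `W_χ = {π(y) | [a, y] ∈ I_χ for all a ∈ m}`, as a subset of
`U(Q(n))/I_χ`.  (Its product is `π(y₁)·π(y₂) = π(y₁y₂)`.) -/
def WchiSet (n l : ℕ) (h : l ∣ n) (σ : UQ n →ₐ[ℂ] UQ n) : Set (Wq n l h) :=
  { w : Wq n l h | ∃ y : UQ n, Wcond h σ y ∧ piq n l h y = w }

/-- The standard basis elements of the parabolic subalgebra `p = ⊕_{j≥0} g_j`. -/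
def pSet (n l : ℕ) (h : l ∣ n) : Set (UQ n) :=
  { x : UQ n | ∃ (p q : Fin (n / l)) (a b : Fin l), a.val ≤ b.val ∧
      (x = Ue (bidx h p a) (bidx h q b) ∨ x = Uf (bidx h p a) (bidx h q b)) }

/-- The standard basis elements of the nilradical `n = ⊕_{j>0} g_j` of `p`. -/
def nSet (n l : ℕ) (h : l ∣ n) : Set (UQ n) :=
  { x : UQ n | ∃ (p q : Fin (n / l)) (a b : Fin l), a.val < b.val ∧
      (x = Ue (bidx h p a) (bidx h q b) ∨ x = Uf (bidx h p a) (bidx h q b)) }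

/-- The kernel of the Harish-Chandra projection `ϑ : U(p) → U(g₀)`, realized inside
`U(Q(n))`: the `ℂ`-span of `U(p)·n`.  (By the PBW theorem, `U(g) = U(p) ⊕ I_χ` and
`U(p) = U(g₀) ⊕ U(p)n`, so for `y ∈ U(g)`, `ϑ(pr(y)) = t` iff
`y - t ∈ I_χ + U(p)n`.) -/
def Lspan (n l : ℕ) (h : l ∣ n) : Submodule ℂ (UQ n) :=
  Submodule.span ℂ
    { x : UQ n | ∃ u ∈ Algebra.adjoin ℂ (pSet n l h), ∃ g ∈ nSet n l h, x = u * g }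

/-- A descriptor of a generator of `U(p)`:  `(b, p, q, a, c)` is
`e_{l(p-1)+(a+1), l(q-1)+(c+1)}` if `b = false` and `f_{…}` if `b = true`
(required: `a ≤ c`). -/
def pgElem {n l : ℕ} (h : l ∣ n) :
    Bool × Fin (n / l) × Fin (n / l) × Fin l × Fin l → UQ n
  | (b, p, q, a, c) => (if b then Uf else Ue) (bidx h p a) (bidx h q c)

/-- Kazhdan degree `2k+2` of a `p`-generator of block offset `k = c - a`. -/
def pgDeg {l m : ℕ} (d : Bool × Fin m × Fin m × Fin l × Fin l) : ℕ :=
  2 * (d.2.2.2.2.val - d.2.2.2.1.val) + 2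

/-- Weight `2k` of a `p`-generator of block offset `k = c - a`. -/
def pgWt {l m : ℕ} (d : Bool × Fin m × Fin m × Fin l × Fin l) : ℕ :=
  2 * (d.2.2.2.2.val - d.2.2.2.1.val)

/-- Monomials in the generators of `U(p)` which are "lower" than bidegree
(Kazhdan degree `D`, weight `W`): either of Kazhdan degree `< D`, or of Kazhdan
degree `≤ D` and weight `< W`. -/
def LowSet (n l : ℕ) (h : l ∣ n) (D W : ℕ) : Set (UQ n) :=
  { x : UQ n | ∃ L : List (Bool × Fin (n / l) × Fin (n / l) × Fin l × Fin l),
      (∀ d ∈ L, d.2.2.2.1.val ≤ d.2.2.2.2.val) ∧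
      x = (L.map (pgElem h)).prod ∧
      ((L.map pgDeg).sum < D ∨ ((L.map pgDeg).sum ≤ D ∧ (L.map pgWt).sum < W)) }

/-- The span of the "lower" monomials. -/
def LowSpan (n l : ℕ) (h : l ∣ n) (D W : ℕ) : Submodule ℂ (UQ n) :=
  Submodule.span ℂ (LowSet n l h D W)

/-! # The super tensor power `U(Q(m))^{⊗l}`

Modeled as the superalgebra with generators `x^i_{pq} = 1^{⊗(l-i)} ⊗ e_{pq} ⊗ 1^{⊗(i-1)}`
(even) and `ξ^i_{pq} = 1^{⊗(l-i)} ⊗ f_{pq} ⊗ 1^{⊗(i-1)}` (odd), subject to the `U(Q(m))`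
relations in each tensor slot and to (super-)commutation between different slots. -/

/-- Generators of `U(Q(m))^{⊗l}`: `X i p q` is `x^i_{pq}` and `Xi i p q` is `ξ^i_{pq}`
(`i : Fin l` is the 0-based tensor slot, counted from the right). -/
inductive TGen (m l : ℕ) : Type
  | X : Fin l → Fin m → Fin m → TGen m l
  | Xi : Fin l → Fin m → Fin m → TGen m l

/-- Kronecker delta on slots. -/
def kdl {l : ℕ} (i j : Fin l) : ℂ := if i = j then 1 else 0

/-- The defining relations of `U(Q(m))^{⊗l}`. -/
inductive TRel (m l : ℕ) : FreeAlgebra ℂ (TGen m l) → FreeAlgebra ℂ (TGen m l) → Prop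
  | xx (i i' : Fin l) (p q r s : Fin m) : TRel m l
      (FreeAlgebra.ι ℂ (TGen.X i p q) * FreeAlgebra.ι ℂ (TGen.X i' r s) -
        FreeAlgebra.ι ℂ (TGen.X i' r s) * FreeAlgebra.ι ℂ (TGen.X i p q))
      ((kdl i i' * kd q r) • FreeAlgebra.ι ℂ (TGen.X i p s) -
        (kdl i i' * kd s p) • FreeAlgebra.ι ℂ (TGen.X i' r q))
  | xxi (i i' : Fin l) (p q r s : Fin m) : TRel m l
      (FreeAlgebra.ι ℂ (TGen.X i p q) * FreeAlgebra.ι ℂ (TGen.Xi i' r s) -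
        FreeAlgebra.ι ℂ (TGen.Xi i' r s) * FreeAlgebra.ι ℂ (TGen.X i p q))
      ((kdl i i' * kd q r) • FreeAlgebra.ι ℂ (TGen.Xi i p s) -
        (kdl i i' * kd s p) • FreeAlgebra.ι ℂ (TGen.Xi i' r q))
  | xixi (i i' : Fin l) (p q r s : Fin m) : TRel m l
      (FreeAlgebra.ι ℂ (TGen.Xi i p q) * FreeAlgebra.ι ℂ (TGen.Xi i' r s) +
        FreeAlgebra.ι ℂ (TGen.Xi i' r s) * FreeAlgebra.ι ℂ (TGen.Xi i p q))
      ((kdl i i' * kd q r) • FreeAlgebra.ι ℂ (TGen.X i p s) +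
        (kdl i i' * kd s p) • FreeAlgebra.ι ℂ (TGen.X i' r q))

/-- The superalgebra `U(Q(m))^{⊗l}`. -/
abbrev TQ (m l : ℕ) := RingQuot (TRel m l)

/-- `x^i_{pq} := 1^{⊗(l-i)} ⊗ e_{pq} ⊗ 1^{⊗(i-1)} ∈ U(Q(m))^{⊗l}`. -/
def xT {m l : ℕ} (i : Fin l) (p q : Fin m) : TQ m l :=
  RingQuot.mkAlgHom ℂ (TRel m l) (FreeAlgebra.ι ℂ (TGen.X i p q))

/-- `ξ^i_{pq} := 1^{⊗(l-i)} ⊗ f_{pq} ⊗ 1^{⊗(i-1)} ∈ U(Q(m))^{⊗l}`. -/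
def xiT {m l : ℕ} (i : Fin l) (p q : Fin m) : TQ m l :=
  RingQuot.mkAlgHom ℂ (TRel m l) (FreeAlgebra.ι ℂ (TGen.Xi i p q))

/-! # The super-Yangian `Y(Q(n))` -/

/-- The index set `{±1, …, ±n}`:  `(false, a)` is the positive index `a` (even),
`(true, a)` is the negative index `-a` (odd). -/
abbrev QIdx (n : ℕ) := Bool × Fin n

/-- Negation `i ↦ -i` on indices. -/
def qneg {n : ℕ} (i : QIdx n) : QIdx n := (!i.1, i.2)

/-- The parity `p(i)`: `0` for positive `i`, `1` for negative `i`. -/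
def qpar {n : ℕ} (i : QIdx n) : ℕ := if i.1 then 1 else 0

/-- Kronecker delta on `{±1, …, ±n}`. -/
def kdq {n : ℕ} (i j : QIdx n) : ℂ := if i = j then 1 else 0

/-- Generators of `Y(Q(n))`: `T m i j` encodes `T^{(m+1)}_{i,j}`. -/
inductive YGen (n : ℕ) : Type
  | T : ℕ → QIdx n → QIdx n → YGen n

/-- `T^{(m)}_{i,j}` in the free algebra, with `T^{(0)}_{i,j} = δ_{ij}`. -/
def Tf {n : ℕ} : ℕ → QIdx n → QIdx n → FreeAlgebra ℂ (YGen n)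
  | 0, i, j => algebraMap ℂ _ (kdq i j)
  | m + 1, i, j => FreeAlgebra.ι ℂ (YGen.T m i j)

/-- The super-commutator `[T^{(a)}_{i,j}, T^{(b)}_{k,l}]` in the free algebra. -/
def ybr {n : ℕ} (a : ℕ) (i j : QIdx n) (b : ℕ) (k l : QIdx n) :
    FreeAlgebra ℂ (YGen n) :=
  Tf a i j * Tf b k l -
    ((-1 : ℂ) ^ ((qpar i + qpar j) * (qpar k + qpar l))) • (Tf b k l * Tf a i j)

/-- The defining relations of the super-Yangian `Y(Q(n))`: for `M, R ≥ 1`,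
`(-1)^{p(i)p(k)+p(i)p(l)+p(k)p(l)} ([T^{(M+1)}_{ij}, T^{(R-1)}_{kl}] - [T^{(M-1)}_{ij}, T^{(R+1)}_{kl}])
 = T^{(M)}_{kj}T^{(R-1)}_{il} + T^{(M-1)}_{kj}T^{(R)}_{il} - T^{(R-1)}_{kj}T^{(M)}_{il}
   - T^{(R)}_{kj}T^{(M-1)}_{il}
   + (-1)^{p(k)+p(l)} (-T^{(M)}_{-k,j}T^{(R-1)}_{-i,l} + T^{(M-1)}_{-k,j}T^{(R)}_{-i,l}
       + T^{(R-1)}_{k,-j}T^{(M)}_{i,-l} - T^{(R)}_{k,-j}T^{(M-1)}_{i,-l})`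
(here `M = m+1`, `R = r+1`), together with `T^{(m)}_{-i,-j} = (-1)^m T^{(m)}_{i,j}`. -/
inductive YRel (n : ℕ) : FreeAlgebra ℂ (YGen n) → FreeAlgebra ℂ (YGen n) → Prop
  | quad (m r : ℕ) (i j k l : QIdx n) : YRel n
      (((-1 : ℂ) ^ (qpar i * qpar k + qpar i * qpar l + qpar k * qpar l)) •
        (ybr (m + 2) i j r k l - ybr m i j (r + 2) k l))
      (Tf (m + 1) k j * Tf r i l + Tf m k j * Tf (r + 1) i l -
        Tf r k j * Tf (m + 1) i l - Tf (r + 1) k j * Tf m i l +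
        ((-1 : ℂ) ^ (qpar k + qpar l)) •
          (-(Tf (m + 1) (qneg k) j * Tf r (qneg i) l) +
            Tf m (qneg k) j * Tf (r + 1) (qneg i) l +
            Tf r k (qneg j) * Tf (m + 1) i (qneg l) -
            Tf (r + 1) k (qneg j) * Tf m i (qneg l)))
  | par (m : ℕ) (i j : QIdx n) : YRel n
      (Tf (m + 1) (qneg i) (qneg j)) (((-1 : ℂ) ^ (m + 1)) • Tf (m + 1) i j)

/-- The super-Yangian `Y(Q(n))`. -/
abbrev YQ (n : ℕ) := RingQuot (YRel n)

/-- The generator `T^{(m)}_{i,j}` of `Y(Q(n))` (with `T^{(0)}_{i,j} = δ_{ij}`). -/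
def TY {n : ℕ} (m : ℕ) (i j : QIdx n) : YQ n :=
  RingQuot.mkAlgHom ℂ (YRel n) (Tf m i j)

/-! # Values of the homomorphisms `U`, `ev`, `ēv` on the generators of `Y(Q(n))`,
and the explicit sums appearing in the main theorems. -/

/-- The value of the homomorphism `U : Y(Q(n)) → U(Q(n))` on the generator
`T^{(r)}_{i,j}`:  `U(T^{(r)}_{i,j}) = (-1)^r e^{(r)}_{j,i}`,
`U(T^{(r)}_{-i,j}) = (-1)^r f^{(r)}_{j,i}` for `i, j > 0`, and the values on the other
generators are forced by `T^{(r)}_{-i,-j} = (-1)^r T^{(r)}_{i,j}`. -/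
def Uval {n : ℕ} (r : ℕ) (i j : QIdx n) : UQ n :=
  (if j.1 then (-1 : ℂ) ^ r else 1) •
    ((-1 : ℂ) ^ r • (if xor i.1 j.1 then fU r j.2 i.2 else eU r j.2 i.2))

/-- The value of the evaluation homomorphism `ev : Y(Q(n)) → U(Q(n))` on `T^{(r)}_{i,j}`:
`ev(T^{(1)}_{i,j}) = -e_{j,i}`, `ev(T^{(1)}_{-i,j}) = -f_{j,i}` for `i, j > 0`,
`ev(T^{(0)}_{i,j}) = δ_{ij}` and `ev(T^{(r)}_{i,j}) = 0` for `r > 1` (with the values on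
the remaining generators forced by `T^{(r)}_{-i,-j} = (-1)^r T^{(r)}_{i,j}`). -/
def evval {n : ℕ} (r : ℕ) (i j : QIdx n) : UQ n :=
  (if j.1 then (-1 : ℂ) ^ r else 1) •
    (match r with
      | 0 => if xor i.1 j.1 then 0 else algebraMap ℂ (UQ n) (kd i.2 j.2)
      | 1 => -(if xor i.1 j.1 then Uf j.2 i.2 else Ue j.2 i.2)
      | _ + 2 => 0)

/-- The value of `ēv = α ∘ ev : Y(Q(n)) → U(Q(n))` on `T^{(r)}_{i,j}`, where `α` is the
principal anti-automorphism of `U(Q(n))`:  `ēv(T^{(1)}_{i,j}) = e_{j,i}`,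
`ēv(T^{(1)}_{-i,j}) = f_{j,i}` for `i, j > 0`, `ēv(T^{(0)}_{i,j}) = δ_{ij}`,
`ēv(T^{(r)}_{i,j}) = 0` for `r > 1`. -/
def bevval {n : ℕ} (r : ℕ) (i j : QIdx n) : UQ n :=
  (if j.1 then (-1 : ℂ) ^ r else 1) •
    (match r with
      | 0 => if xor i.1 j.1 then 0 else algebraMap ℂ (UQ n) (kd i.2 j.2)
      | 1 => (if xor i.1 j.1 then Uf j.2 i.2 else Ue j.2 i.2)
      | _ + 2 => 0)

/-- The sum `Σ_{p_1,…,p_{r-1}} Σ_{l ≥ i_1 ≥ i_2 ≥ … ≥ i_r ≥ 1}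
Π_{a=1}^r (x^{i_a}_{p_{a-1},p_a} + (-1)^{r-a} ξ^{i_a}_{p_{a-1},p_a})`
(with `p_0 = p`, `p_r = q`), an element of `U(Q(m))^{⊗l}`. -/
def chainProdDec (m l : ℕ) (r : ℕ) (p q : Fin m) : TQ m l :=
  ∑ c : Fin (r + 1) → Fin m, ∑ iv : Fin r → Fin l,
    (if c 0 = p ∧ c (Fin.last r) = q ∧ (∀ a b : Fin r, a ≤ b → iv b ≤ iv a)
      then (1 : ℂ) else 0) •
      (List.ofFn fun a : Fin r =>
        xT (iv a) (c a.castSucc) (c a.succ) +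
          ((-1 : ℂ) ^ (r - 1 - a.val)) • xiT (iv a) (c a.castSucc) (c a.succ)).prod

/-- The sum `Σ_{p_1,…,p_{r-1}} Σ_{1 ≤ i_1 < i_2 < … < i_r ≤ l}
Π_{a=1}^r (x^{i_a}_{p_{a-1},p_a} + (-1)^{r-a} ξ^{i_a}_{p_{a-1},p_a})`
(with `p_0 = p`, `p_r = q`), an element of `U(Q(m))^{⊗l}`. -/
def chainProdInc (m l : ℕ) (r : ℕ) (p q : Fin m) : TQ m l :=
  ∑ c : Fin (r + 1) → Fin m, ∑ iv : Fin r → Fin l,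
    (if c 0 = p ∧ c (Fin.last r) = q ∧ (∀ a b : Fin r, a < b → iv a < iv b)
      then (1 : ℂ) else 0) •
      (List.ofFn fun a : Fin r =>
        xT (iv a) (c a.castSucc) (c a.succ) +
          ((-1 : ℂ) ^ (r - 1 - a.val)) • xiT (iv a) (c a.castSucc) (c a.succ)).prod

/-- The elements `z^{(r)}_{±q,p}` of `U(Q(m))^{⊗l}`:  the even (`sgn = false`,
giving `z^{(r)}_{q,p}`) resp. odd (`sgn = true`, giving `z^{(r)}_{-q,p}`) component of
`chainProdDec`, computed using the parity involution `σT` of `U(Q(m))^{⊗l}`;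
`z^{(0)}_{q,p} = δ_{qp}`, `z^{(0)}_{-q,p} = 0`. -/
def zDec {m l : ℕ} (σT : TQ m l →ₐ[ℂ] TQ m l) :
    ℕ → Bool → Fin m → Fin m → TQ m l
  | 0, sgn, q, p => if sgn then 0 else algebraMap ℂ (TQ m l) (kd q p)
  | r + 1, sgn, q, p =>
      (2⁻¹ : ℂ) • (chainProdDec m l (r + 1) p q +
        (if sgn then (-1 : ℂ) else 1) • σT (chainProdDec m l (r + 1) p q))

/-- The elements `z̃^{(r)}_{±q,p}` of `U(Q(m))^{⊗l}` (as `zDec`, with increasing chains). -/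
def zInc {m l : ℕ} (σT : TQ m l →ₐ[ℂ] TQ m l) :
    ℕ → Bool → Fin m → Fin m → TQ m l
  | 0, sgn, q, p => if sgn then 0 else algebraMap ℂ (TQ m l) (kd q p)
  | r + 1, sgn, q, p =>
      (2⁻¹ : ℂ) • (chainProdInc m l (r + 1) p q +
        (if sgn then (-1 : ℂ) else 1) • σT (chainProdInc m l (r + 1) p q))

/-- The explicit formula for the antipode value `S(T^{(r)}_{i,j})` (`r ≥ 1`):
`S(T^{(r)}_{i,j}) = Σ_{m=1}^{r} (-1)^m Σ_{i_1,…,i_{m-1}} Σ_{r_1+⋯+r_m=r, r_a>0}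
(-1)^{ν(i,i_1,…,i_{m-1},j)} T^{(r_1)}_{i,i_1} ⋯ T^{(r_m)}_{i_{m-1},j}` where
`ν(i_0,…,i_m) = Σ_{0≤k<s≤m-1} (p(i_k)+p(i_{k+1}))(p(i_s)+p(i_{s+1}))`. -/
def STval {n : ℕ} (r : ℕ) (i j : QIdx n) : YQ n :=
  ∑ m : Fin r,
    ((-1 : ℂ) ^ (m.val + 1)) •
      ∑ ch : Fin (m.val + 2) → QIdx n, ∑ c : Fin (m.val + 1) → Fin (r + 1),
        (if ch 0 = i ∧ ch (Fin.last (m.val + 1)) = j ∧ (∀ a, 1 ≤ (c a).val) ∧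
              (∑ a, (c a).val) = r
          then ((-1 : ℂ) ^ (∑ a : Fin (m.val + 1), ∑ b : Fin (m.val + 1),
              if a < b then
                (qpar (ch a.castSucc) + qpar (ch a.succ)) *
                  (qpar (ch b.castSucc) + qpar (ch b.succ))
              else 0))
          else 0) •
        (List.ofFn fun a : Fin (m.val + 1) =>
          TY (c a).val (ch a.castSucc) (ch a.succ)).prod


/-- Left multiplication of a column by a matrix. -/
def lo {n : ℕ} {A : Type*} [Ring A] (g : Fin n → Fin n → A) (v : Fin n → A) (i : Fin n) : A :=
  ∑ p, g i p * v p

set_option linter.unusedSectionVars false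

section Abstract
variable {n : ℕ} {A : Type*} [Ring A] [Algebra ℂ A]

lemma kd_symm (i j : Fin n) : kd i j = kd j i := by
  simp [kd, eq_comm]

lemma lo_add (g : Fin n → Fin n → A) (v w : Fin n → A) (i : Fin n) :
    lo g (fun p => v p + w p) i = lo g (fun p => v p) i + lo g (fun p => w p) i := by
  simp [lo, mul_add, Finset.sum_add_distrib]

lemma lo_sub (g : Fin n → Fin n → A) (v w : Fin n → A) (i : Fin n) :
    lo g (fun p => v p - w p) i = lo g (fun p => v p) i - lo g (fun p => w p) i := by
  simp [lo, mul_sub, Finset.sum_sub_distrib]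

lemma lo_neg (g : Fin n → Fin n → A) (v : Fin n → A) (i : Fin n) :
    lo g (fun p => - v p) i = - lo g (fun p => v p) i := by
  simp [lo]

lemma lo_smul (g : Fin n → Fin n → A) (c : ℂ) (v : Fin n → A) (i : Fin n) :
    lo g (fun p => c • v p) i = c • lo g (fun p => v p) i := by
  simp [lo, Finset.smul_sum]

lemma lo_mul (g : Fin n → Fin n → A) (v : Fin n → A) (b : A) (i : Fin n) :
    lo g v i * b = lo g (fun p => v p * b) i := by
  simp [lo, Finset.sum_mul, mul_assoc]

lemma lo_kd (g : Fin n → Fin n → A) (v : Fin n → A) (i l : Fin n) :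
    lo g (fun p => kd l p • v p) i = g i l * v l := by
  simp [lo, kd]

lemma lo_kdR (g : Fin n → Fin n → A) (v : Fin n → A) (i l : Fin n) :
    lo g (fun p => kd p l • v p) i = g i l * v l := by
  simp [lo, kd]

lemma sum_kd (v : Fin n → A) (l : Fin n) : ∑ p, kd l p • v p = v l := by
  simp [kd]

lemma sum_kdR (v : Fin n → A) (l : Fin n) : ∑ p, kd p l • v p = v l := by
  simp [kd]

/-- moving `y` to the right through `lo g`, knowing (anti)commutators -/
lemma lo_swap (g : Fin n → Fin n → A) (y : A) (c d s : ℂ) (i k : Fin n) (x : A) (h : Fin n → A)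
    (H : ∀ p, g i p * y = s • (y * g i p) + ((c * kd p k) • x + d • h p)) (v : Fin n → A) :
    s • (y * lo g v i) = lo g (fun p => y * v p) i - c • (x * v k) - d • ∑ p, h p * v p := by
  have : lo g (fun p => y * v p) i = ∑ p, (s • (y * (g i p * v p)) + kd p k • (c • (x * v p))
      + d • (h p * v p)) := by
    unfold lo
    refine Finset.sum_congr rfl fun p _ => ?_
    rw [← mul_assoc, H]
    simp only [add_mul, smul_mul_assoc, mul_assoc, smul_smul, mul_comm c, add_assoc]
  rw [this, Finset.sum_add_distrib, Finset.sum_add_distrib, sum_kdR, ← Finset.smul_sum,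
    ← Finset.smul_sum, lo, Finset.mul_sum]
  abel

/-- moving `y` to the right through `lo g`, second form -/
lemma lo_swapR (g : Fin n → Fin n → A) (y : A) (c d s : ℂ) (i j k : Fin n) (x : A) (h : Fin n → A)
    (H : ∀ p, y * g k p = s • (g k p * y) + (d • h p + (c * kd p i) • x)) (v : Fin n → A) :
    y * lo g v k = s • lo g (fun p => y * v p) k + d • (∑ p, h p * v p) + c • (x * v i) := by
  have : y * lo g v k = ∑ p, (s • (g k p * (y * v p)) + d • (h p * v p)
      + kd p i • (c • (x * v p))) := by
    unfold lo
    rw [Finset.mul_sum]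
    refine Finset.sum_congr rfl fun p _ => ?_
    rw [← mul_assoc, H]
    simp only [add_mul, smul_mul_assoc, mul_assoc, smul_smul, mul_comm c, add_assoc]
  rw [this, Finset.sum_add_distrib, Finset.sum_add_distrib, sum_kdR, ← Finset.smul_sum,
    ← Finset.smul_sum, lo]

/-- abstract version of the situation -/
structure QD (e f : Fin n → Fin n → A) (E F : ℕ → Fin n → Fin n → A) : Prop where
  ee : ∀ i j k l, e i j * e k l - e k l * e i j = kd j k • e i l - kd l i • e k j
  ef : ∀ i j k l, e i j * f k l - f k l * e i j = kd j k • f i l - kd l i • f k j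
  ff : ∀ i j k l, f i j * f k l + f k l * f i j = kd j k • e i l + kd l i • e k j
  E0 : ∀ i j, E 0 i j = kd i j • (1 : A)
  F0 : ∀ i j, F 0 i j = 0
  ES : ∀ m i j, E (m + 1) i j = lo e (fun p => E m p j) i + (-1 : ℂ) ^ m • lo f (fun p => F m p j) i
  FS : ∀ m i j, F (m + 1) i j = lo e (fun p => F m p j) i + (-1 : ℂ) ^ m • lo f (fun p => E m p j) i

variable {e f : Fin n → Fin n → A} {E F : ℕ → Fin n → Fin n → A}

lemma QD.com (Q : QD e f E F) (m : ℕ) : ∀ i j k l,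
    (e i j * E m k l = E m k l * e i j + (kd j k • E m i l - kd l i • E m k j)) ∧
    (e i j * F m k l = F m k l * e i j + (kd j k • F m i l - kd l i • F m k j)) ∧
    (f i j * E m k l = E m k l * f i j +
      ((-(-1 : ℂ) ^ m) • kd j k • F m i l - kd l i • F m k j)) ∧
    (f i j * F m k l = - (F m k l * f i j) +
      ((-(-1 : ℂ) ^ m) • kd j k • E m i l + kd l i • E m k j)) := by
  induction m with
  | zero =>
    intro i j k l
    simp only [Q.E0, Q.F0]
    by_cases h1 : j = k <;> by_cases h2 : l = i <;> by_cases h3 : k = l <;>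
      simp [kd, h1, h2, h3, Ne.symm, eq_comm] <;> grind
  | succ m ih =>
    intro i j k l
    have see : ∀ v, e i j * lo e v k = lo e (fun p => e i j * v p) k + kd j k • lo e v i
        - e k j * v i := by
      intro v
      have := lo_swapR e (e i j) (-1) (kd j k) 1 i j k (e k j) (fun p => e i p) (by
        intro p
        have := Q.ee i j k p
        linear_combination (norm := module) this) v
      rw [this, lo]; unfold lo; module
    have sef : ∀ v, e i j * lo f v k = lo f (fun p => e i j * v p) k + kd j k • lo f v i
        - f k j * v i := by
      intro v
      have := lo_swapR f (e i j) (-1) (kd j k) 1 i j k (f k j) (fun p => f i p) (by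
        intro p
        have := Q.ef i j k p
        linear_combination (norm := module) this) v
      rw [this, lo]; unfold lo; module
    have sfe : ∀ v, f i j * lo e v k = lo e (fun p => f i j * v p) k + kd j k • lo f v i
        - f k j * v i := by
      intro v
      have := lo_swapR e (f i j) (-1) (kd j k) 1 i j k (f k j) (fun p => f i p) (by
        intro p
        have := Q.ef k p i j
        linear_combination (norm := module) -this) v
      rw [this, lo]; unfold lo; module
    have sff : ∀ v, f i j * lo f v k = - lo f (fun p => f i j * v p) k + kd j k • lo e v i
        + e k j * v i := by
      intro v
      have := lo_swapR f (f i j) 1 (kd j k) (-1) i j k (e k j) (fun p => e i p) (by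
        intro p
        have := Q.ff i j k p
        linear_combination (norm := module) this) v
      rw [this, lo]; unfold lo; module
    have K := fun g => congrArg (fun v => lo g v k) (funext fun p => (ih i j p l).1)
    have K2 := fun g => congrArg (fun v => lo g v k) (funext fun p => (ih i j p l).2.1)
    have K3 := fun g => congrArg (fun v => lo g v k) (funext fun p => (ih i j p l).2.2.1)
    have K4 := fun g => congrArg (fun v => lo g v k) (funext fun p => (ih i j p l).2.2.2)
    simp only [lo_add, lo_sub, lo_neg, lo_smul, lo_kd] at K K2 K3 K4
    simp only [Q.ES, Q.FS, mul_add, add_mul, mul_smul_comm, smul_mul_assoc, see, sef, sfe, sff,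
      lo_mul, K, K2, K3, K4, pow_succ]
    rcases neg_one_pow_eq_or ℂ m with h | h <;> simp only [h] <;>
    exact ⟨by module, by module, by module, by module⟩

lemma QD.addForm (Q : QD e f E F) (m : ℕ) (j : Fin n) (r : ℕ) : ∀ k,
    (lo (E r) (fun p => E m p j) k + (-1 : ℂ) ^ m • lo (F r) (fun p => F m p j) k = E (r + m) k j) ∧
    (lo (E r) (fun p => F m p j) k + (-1 : ℂ) ^ m • lo (F r) (fun p => E m p j) k
      = F (r + m) k j) := by
  have key : ∀ (g h : Fin n → Fin n → A) (v : Fin n → A) k,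
      lo (fun i j => lo g (fun p => h p j) i) v k = lo g (fun p => lo h v p) k := by
    intro g h v k
    simp only [lo, Finset.sum_mul, Finset.mul_sum, mul_assoc]
    rw [Finset.sum_comm]
  have key2 : ∀ (g h : Fin n → Fin n → A) (c : ℂ) (v : Fin n → A) k,
      lo (fun i j => g i j + c • h i j) v k = lo g v k + c • lo h v k := by
    intro g h c v k
    simp only [lo, add_mul, smul_mul_assoc, Finset.sum_add_distrib, Finset.smul_sum]
  induction r with
  | zero =>
    intro k
    have h1 : ∀ v, lo (E 0) v k = v k := by
      intro v; simp [lo, Q.E0, sum_kd]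
    have h2 : ∀ v, lo (F 0) v k = 0 := by
      intro v; simp [lo, Q.F0]
    simp [h1, h2]
  | succ r ih =>
    intro k
    have hE : E (r + 1) = fun i j => lo e (fun p => E r p j) i
      + (-1 : ℂ) ^ r • lo f (fun p => F r p j) i := by
      funext i j; exact Q.ES r i j
    have hF : F (r + 1) = fun i j => lo e (fun p => F r p j) i
      + (-1 : ℂ) ^ r • lo f (fun p => E r p j) i := by
      funext i j; exact Q.FS r i j
    rw [show r + 1 + m = (r + m) + 1 by ring, Q.ES, Q.FS, hE, hF]
    simp only [← ih, key, key2, lo_add, lo_smul, pow_add]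
    rcases neg_one_pow_eq_or ℂ m with h | h <;> simp only [h] <;>
    exact ⟨by module, by module⟩

lemma QD.swap (Q : QD e f E F) (r : ℕ) (i k l : Fin n) (v : Fin n → A) :
    (E r k l * lo e v i = lo e (fun p => E r k l * v p) i - E r i l * v k
      + kd l i • lo (E r) v k) ∧
    (F r k l * lo e v i = lo e (fun p => F r k l * v p) i - F r i l * v k
      + kd l i • lo (F r) v k) ∧
    (E r k l * lo f v i = lo f (fun p => E r k l * v p) i + (-1 : ℂ) ^ r • (F r i l * v k)
      + kd l i • lo (F r) v k) ∧
    (F r k l * lo f v i = - lo f (fun p => F r k l * v p) i - (-1 : ℂ) ^ r • (E r i l * v k)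
      + kd l i • lo (E r) v k) := by
  refine ⟨?_, ?_, ?_, ?_⟩
  · have := lo_swap e (E r k l) 1 (-kd l i) 1 i k (E r i l) (E r k) (by
      intro p
      linear_combination (norm := module) (Q.com r i p k l).1) v
    unfold lo at *
    linear_combination (norm := module) this
  · have := lo_swap e (F r k l) 1 (-kd l i) 1 i k (F r i l) (F r k) (by
      intro p
      linear_combination (norm := module) (Q.com r i p k l).2.1) v
    unfold lo at *
    linear_combination (norm := module) this
  · have := lo_swap f (E r k l) (-(-1) ^ r) (-kd l i) 1 i k (F r i l) (F r k) (by
      intro p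
      linear_combination (norm := module) (Q.com r i p k l).2.2.1) v
    unfold lo at *
    linear_combination (norm := module) this
  · have := lo_swap f (F r k l) (-(-1) ^ r) (kd l i) (-1) i k (E r i l) (E r k) (by
      intro p
      linear_combination (norm := module) (Q.com r i p k l).2.2.2) v
    unfold lo at *
    linear_combination (norm := module) (-1 : ℂ) • this

lemma QD.main (Q : QD e f E F) (r m : ℕ) (j k l : Fin n) : ∀ i,
    (E (m+2) i j * E r k l - E r k l * E (m+2) i j
        - (E m i j * E (r+2) k l - E (r+2) k l * E m i j) =
      -(E (m+1) i l * E r k j + E m i l * E (r+1) k j - E r i l * E (m+1) k j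
          - E (r+1) i l * E m k j
        + (-(F (m+1) i l * F r k j) + F m i l * F (r+1) k j
          - ((-1:ℂ)^m * (-1:ℂ)^r) • (F r i l * F (m+1) k j)
          + ((-1:ℂ)^m * (-1:ℂ)^r) • (F (r+1) i l * F m k j)))) ∧
    (E (m+2) i j * F r k l - F r k l * E (m+2) i j
        - (E m i j * F (r+2) k l - F (r+2) k l * E m i j) =
      -(F (m+1) i l * E r k j + F m i l * E (r+1) k j - F r i l * E (m+1) k j
          - F (r+1) i l * E m k j
        - (-(E (m+1) i l * F r k j) + E m i l * F (r+1) k j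
          - ((-1:ℂ)^m * (-1:ℂ)^r) • (E r i l * F (m+1) k j)
          + ((-1:ℂ)^m * (-1:ℂ)^r) • (E (r+1) i l * F m k j)))) ∧
    (F (m+2) i j * E r k l - E r k l * F (m+2) i j
        - (F m i j * E (r+2) k l - E (r+2) k l * F m i j) =
      -(E (m+1) i l * F r k j + E m i l * F (r+1) k j - E r i l * F (m+1) k j
          - E (r+1) i l * F m k j
        + (-(F (m+1) i l * E r k j) + F m i l * E (r+1) k j
          - ((-1:ℂ)^m * (-1:ℂ)^r) • (F r i l * E (m+1) k j)
          + ((-1:ℂ)^m * (-1:ℂ)^r) • (F (r+1) i l * E m k j)))) ∧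
    (F (m+2) i j * F r k l + F r k l * F (m+2) i j
        - (F m i j * F (r+2) k l + F (r+2) k l * F m i j) =
      (F (m+1) i l * F r k j + F m i l * F (r+1) k j - F r i l * F (m+1) k j
          - F (r+1) i l * F m k j
        - (-(E (m+1) i l * E r k j) + E m i l * E (r+1) k j
          - ((-1:ℂ)^m * (-1:ℂ)^r) • (E r i l * E (m+1) k j)
          + ((-1:ℂ)^m * (-1:ℂ)^r) • (E (r+1) i l * E m k j)))) := by
  induction m with
  | zero =>
    intro i
    have hE1 : ∀ i j, E 1 i j = e i j := by
      intro i j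
      have := Q.ES 0 i j
      simpa [Q.E0, Q.F0, lo, kd] using this
    have hF1 : ∀ i j, F 1 i j = f i j := by
      intro i j
      have := Q.FS 0 i j
      simpa [Q.E0, Q.F0, lo, kd] using this
    have K := fun g => congrArg (fun v => lo g v i) (funext fun p => (Q.com r p j k l).1)
    have K2 := fun g => congrArg (fun v => lo g v i) (funext fun p => (Q.com r p j k l).2.1)
    have K3 := fun g => congrArg (fun v => lo g v i) (funext fun p => (Q.com r p j k l).2.2.1)
    have K4 := fun g => congrArg (fun v => lo g v i) (funext fun p => (Q.com r p j k l).2.2.2)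
    simp only [lo_add, lo_sub, lo_neg, lo_smul, lo_kd] at K K2 K3 K4
    have A1 := Q.addForm 1 j r k
    simp only [hE1, hF1] at A1
    obtain ⟨B1, B2⟩ := A1
    have S1 := fun v => Q.swap r i k l v
    rw [show 0 + 2 = 1 + 1 by rfl, Q.ES 1 i j, Q.FS 1 i j, Q.ES r i l, Q.FS r i l]
    simp only [zero_add, hE1, hF1, Q.E0, Q.F0, mul_add, add_mul, mul_smul_comm, smul_mul_assoc,
      (S1 _).1, (S1 _).2.1, (S1 _).2.2.1, (S1 _).2.2.2, lo_mul, mul_one, one_mul, mul_zero,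
      zero_mul, smul_zero, kd_symm i l, kd_symm k j]
    rcases neg_one_pow_eq_or ℂ r with hr | hr <;>
    simp only [pow_zero, pow_one, hr] at K K2 K3 K4 B1 B2 ⊢
    · refine ⟨?_, ?_, ?_, ?_⟩
      · linear_combination (norm := module) K e + (-1 : ℂ) • K3 f - kd l i • B1
      · linear_combination (norm := module) K2 e + (-1 : ℂ) • K4 f + kd l i • B2
      · linear_combination (norm := module) K3 e + (-1 : ℂ) • K f - kd l i • B2
      · linear_combination (norm := module) K4 e + (-1 : ℂ) • K2 f - kd l i • B1
    · refine ⟨?_, ?_, ?_, ?_⟩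
      · linear_combination (norm := module) K e + (-1 : ℂ) • K3 f - kd l i • B1
      · linear_combination (norm := module) K2 e + (-1 : ℂ) • K4 f + kd l i • B2
      · linear_combination (norm := module) K3 e + (-1 : ℂ) • K f - kd l i • B2
      · linear_combination (norm := module) K4 e + (-1 : ℂ) • K2 f - kd l i • B1
  | succ m ih =>
    intro i
    have K := fun g => congrArg (fun v => lo g v i) (funext fun p => (ih p).1)
    have K2 := fun g => congrArg (fun v => lo g v i) (funext fun p => (ih p).2.1)
    have K3 := fun g => congrArg (fun v => lo g v i) (funext fun p => (ih p).2.2.1)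
    have K4 := fun g => congrArg (fun v => lo g v i) (funext fun p => (ih p).2.2.2)
    simp only [lo_add, lo_sub, lo_neg, lo_smul] at K K2 K3 K4
    have A1 := Q.addForm (m+2) j r k
    have A2 := Q.addForm m j (r+2) k
    rw [show r + (m + 2) = r + 2 + m by ring] at A1
    have B1 := A1.1.trans A2.1.symm
    have B2 := A1.2.trans A2.2.symm
    have S1 := fun v => Q.swap r i k l v
    have S2 := fun v => Q.swap (r+2) i k l v
    rw [show m + 1 + 2 = (m + 2) + 1 by ring, show m + 1 + 1 = m + 2 by ring,
      Q.ES (m+2) i j, Q.FS (m+2) i j, Q.ES m i j, Q.FS m i j, Q.ES m i l, Q.FS m i l,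
      Q.ES (m+1) i l, Q.FS (m+1) i l, Q.ES r i l, Q.FS r i l]
    simp only [mul_add, add_mul, mul_smul_comm, smul_mul_assoc, (S1 _).1, (S1 _).2.1,
      (S1 _).2.2.1, (S1 _).2.2.2, (S2 _).1, (S2 _).2.1, (S2 _).2.2.1, (S2 _).2.2.2, lo_mul]
    have G1 := Q.ES (r+1) i l
    have G2 := Q.FS (r+1) i l
    rw [show r + 1 + 1 = r + 2 by ring] at G1 G2
    simp only [G1, G2, add_mul, smul_mul_assoc, lo_mul]
    rcases neg_one_pow_eq_or ℂ m with h | h <;>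
    rcases neg_one_pow_eq_or ℂ r with hr | hr <;>
    simp only [pow_succ, h, hr] at K K2 K3 K4 B1 B2 ⊢
    · refine ⟨?_, ?_, ?_, ?_⟩
      · linear_combination (norm := module) K e + (1 : ℂ) • K3 f - kd l i • B1
      · linear_combination (norm := module) K2 e + (1 : ℂ) • K4 f - ((1 : ℂ) * kd l i) • B2
      · linear_combination (norm := module) K3 e + (1 : ℂ) • K f - kd l i • B2
      · linear_combination (norm := module) K4 e + (1 : ℂ) • K2 f + ((1 : ℂ) * kd l i) • B1
    · refine ⟨?_, ?_, ?_, ?_⟩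
      · linear_combination (norm := module) K e + (1 : ℂ) • K3 f - kd l i • B1
      · linear_combination (norm := module) K2 e + (1 : ℂ) • K4 f - ((1 : ℂ) * kd l i) • B2
      · linear_combination (norm := module) K3 e + (1 : ℂ) • K f - kd l i • B2
      · linear_combination (norm := module) K4 e + (1 : ℂ) • K2 f + ((1 : ℂ) * kd l i) • B1
    · refine ⟨?_, ?_, ?_, ?_⟩
      · linear_combination (norm := module) K e + (-1 : ℂ) • K3 f - kd l i • B1
      · linear_combination (norm := module) K2 e + (-1 : ℂ) • K4 f - ((-1 : ℂ) * kd l i) • B2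
      · linear_combination (norm := module) K3 e + (-1 : ℂ) • K f - kd l i • B2
      · linear_combination (norm := module) K4 e + (-1 : ℂ) • K2 f + ((-1 : ℂ) * kd l i) • B1
    · refine ⟨?_, ?_, ?_, ?_⟩
      · linear_combination (norm := module) K e + (-1 : ℂ) • K3 f - kd l i • B1
      · linear_combination (norm := module) K2 e + (-1 : ℂ) • K4 f - ((-1 : ℂ) * kd l i) • B2
      · linear_combination (norm := module) K3 e + (-1 : ℂ) • K f - kd l i • B2
      · linear_combination (norm := module) K4 e + (-1 : ℂ) • K2 f + ((-1 : ℂ) * kd l i) • B1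

/-- Abstract version of `Uval`. -/
def tv (E F : ℕ → Fin n → Fin n → A) (r : ℕ) (i j : QIdx n) : A :=
  (if j.1 then (-1 : ℂ) ^ r else 1) •
    ((-1 : ℂ) ^ r • (if xor i.1 j.1 then F r j.2 i.2 else E r j.2 i.2))

lemma tv_par (m : ℕ) (i j : QIdx n) :
    tv E F m (qneg i) (qneg j) = ((-1 : ℂ) ^ m) • tv E F m i j := by
  obtain ⟨a, i⟩ := i
  obtain ⟨b, j⟩ := j
  rcases neg_one_pow_eq_or ℂ m with h | h <;>
  cases a <;> cases b <;> simp [tv, qneg, h]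

set_option maxHeartbeats 4000000 in
lemma QD.quad (Q : QD e f E F) (m r : ℕ) (i j k l : QIdx n) :
    ((-1 : ℂ) ^ (qpar i * qpar k + qpar i * qpar l + qpar k * qpar l)) •
        ((tv E F (m + 2) i j * tv E F r k l -
          ((-1 : ℂ) ^ ((qpar i + qpar j) * (qpar k + qpar l))) •
            (tv E F r k l * tv E F (m + 2) i j)) -
        (tv E F m i j * tv E F (r + 2) k l -
          ((-1 : ℂ) ^ ((qpar i + qpar j) * (qpar k + qpar l))) •
            (tv E F (r + 2) k l * tv E F m i j))) =
      (tv E F (m + 1) k j * tv E F r i l + tv E F m k j * tv E F (r + 1) i l -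
        tv E F r k j * tv E F (m + 1) i l - tv E F (r + 1) k j * tv E F m i l +
        ((-1 : ℂ) ^ (qpar k + qpar l)) •
          (-(tv E F (m + 1) (qneg k) j * tv E F r (qneg i) l) +
            tv E F m (qneg k) j * tv E F (r + 1) (qneg i) l +
            tv E F r k (qneg j) * tv E F (m + 1) i (qneg l) -
            tv E F (r + 1) k (qneg j) * tv E F m i (qneg l))) := by
  obtain ⟨a, i⟩ := i
  obtain ⟨b, j⟩ := j
  obtain ⟨c, k⟩ := k
  obtain ⟨d, l⟩ := l
  obtain ⟨M1, M2, M3, M4⟩ := Q.main r m i l k j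
  rcases neg_one_pow_eq_or ℂ m with h | h <;>
  rcases neg_one_pow_eq_or ℂ r with hr | hr <;>
  simp only [h, hr] at M1 M2 M3 M4 <;>
  cases a <;> cases b <;> cases c <;> cases d <;>
  simp [tv, qneg, qpar, pow_succ, h, hr] <;>
  first
  | linear_combination (norm := module) M1
  | linear_combination (norm := module) (-1 : ℂ) • M1
  | linear_combination (norm := module) M2
  | linear_combination (norm := module) (-1 : ℂ) • M2
  | linear_combination (norm := module) M3
  | linear_combination (norm := module) (-1 : ℂ) • M3
  | linear_combination (norm := module) M4
  | linear_combination (norm := module) (-1 : ℂ) • M4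

end Abstract

section Concrete
variable {n : ℕ}

lemma UQ_QD : QD (Ue (n := n)) Uf eU fU where
  ee i j k l := by
    have := RingQuot.mkAlgHom_rel ℂ (QRel.ee i j k l)
    simp only [map_sub, map_mul, map_smul] at this
    exact this
  ef i j k l := by
    have := RingQuot.mkAlgHom_rel ℂ (QRel.ef i j k l)
    simp only [map_sub, map_mul, map_smul] at this
    exact this
  ff i j k l := by
    have := RingQuot.mkAlgHom_rel ℂ (QRel.ff i j k l)
    simp only [map_add, map_mul, map_smul] at this
    exact this
  E0 i j := by
    rw [← Algebra.algebraMap_eq_smul_one]; rfl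
  F0 i j := rfl
  ES m i j := rfl
  FS m i j := rfl

/-- The homomorphism on the free algebra. -/
def preU (n : ℕ) : FreeAlgebra ℂ (YGen n) →ₐ[ℂ] UQ n :=
  FreeAlgebra.lift ℂ (fun g => match g with | YGen.T m i j => Uval (m + 1) i j)

lemma preU_Tf (m : ℕ) (i j : QIdx n) : preU n (Tf m i j) = Uval m i j := by
  cases m with
  | zero =>
    obtain ⟨a, i⟩ := i
    obtain ⟨b, j⟩ := j
    simp only [Tf, AlgHom.commutes]
    cases a <;> cases b <;> simp [Uval, kdq, UQ_QD.E0, UQ_QD.F0, kd, eq_comm]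
  | succ m => simp [Tf, preU]

lemma preU_rel {x y : FreeAlgebra ℂ (YGen n)} (h : YRel n x y) : preU n x = preU n y := by
  cases h with
  | par m i j =>
    rw [map_smul, preU_Tf, preU_Tf]
    exact tv_par (A := UQ n) (E := eU) (F := fU) (m + 1) i j
  | quad m r i j k l =>
    simp only [map_smul, map_sub, map_add, map_neg, map_mul, ybr, preU_Tf]
    exact UQ_QD.quad m r i j k l

end Concrete

/-- There exists an algebra homomorphism `U : Y(Q(n)) → U(Q(n))`
determined on generators by `U(T^{(r)}_{i,j}) = (-1)^r e^{(r)}_{j,i}` and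
`U(T^{(r)}_{-i,j}) = (-1)^r f^{(r)}_{j,i}` for `i, j > 0` and `r > 0`, and
`U(T^{(0)}_{i,j}) = δ_{ij}` (values on the remaining generators being forced by
`T^{(m)}_{-i,-j} = (-1)^m T^{(m)}_{i,j}`). -/
theorem statement1 (n : ℕ) :
    ∃ U : YQ n →ₐ[ℂ] UQ n,
      (∀ i j : QIdx n, U (TY 0 i j) = algebraMap ℂ (UQ n) (kdq i j)) ∧
      (∀ (r : ℕ) (i j : Fin n),
        U (TY (r + 1) (false, i) (false, j)) = ((-1 : ℂ) ^ (r + 1)) • eU (r + 1) j i) ∧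
      (∀ (r : ℕ) (i j : Fin n),
        U (TY (r + 1) (true, i) (false, j)) = ((-1 : ℂ) ^ (r + 1)) • fU (r + 1) j i) := by
  have val : ∀ r (i j : QIdx n),
      (RingQuot.liftAlgHom ℂ ⟨preU n, fun _ _ h => preU_rel h⟩) (TY r i j) = Uval r i j := by
    intro r i j
    rw [TY, RingQuot.liftAlgHom_mkAlgHom_apply, preU_Tf]
  refine ⟨RingQuot.liftAlgHom ℂ ⟨preU n, fun _ _ h => preU_rel h⟩, ?_, ?_, ?_⟩
  · intro i j
    rw [val, ← preU_Tf, Tf, AlgHom.commutes]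
  · intro r i j
    rw [val]
    simp [Uval]
  · intro r i j
    rw [val]
    simp [Uval]
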